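/- Let A and à be symmetric block 2×2 matrices built from the 3D interior-mode discretization: A = [[A¹¹, A¹²],[A²¹, A²²]] and à = [[á¹,Ã¹²],[Ã²¹,Ã²²]] as defined from Kronecker products of M, S, M^{−1}, I (with à obtained from A by replacing every occurrence of S with M^{−1}). Then the solution space of A x = à x in ℝ^{2(N−1)³} has dimension at least 2(N−3)³. -/

import Mathlib

open Polynomial

/-- The Legendre polynomial of degree `n` (Rodrigues formula). -/
noncomputable def legendre (n : ℕ) : Polynomial ℝ :=
  C ((1 : ℝ) / (2 ^ n * n.factorial)) * derivative^[n] ((X ^ 2 - 1) ^ n)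

/-- `ψ_{m+1}(ξ) = (1/√(2(2m+1))) (L_{m+1}(ξ) − L_{m−1}(ξ))`. -/
noncomputable def psiF (m : ℕ) (x : ℝ) : ℝ :=
  (Real.sqrt (2 * (2 * (m : ℝ) + 1)))⁻¹ *
    ((legendre (m + 1)).eval x - (legendre (m - 1)).eval x)

/-- The normalized Legendre function `φ_m(ξ) = √((2m+1)/2) L_m(ξ)`. -/
noncomputable def phiF (m : ℕ) (x : ℝ) : ℝ :=
  Real.sqrt ((2 * (m : ℝ) + 1) / 2) * (legendre m).eval x

/-- The `(N−1)×(N−1)` mass matrix `M_{mn} = ∫ ψ_{n+1} ψ_{m+1}`,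
with index `i : Fin (N−1)` corresponding to `m = i + 1`. -/
noncomputable def massMatrix (N : ℕ) : Matrix (Fin (N - 1)) (Fin (N - 1)) ℝ :=
  Matrix.of fun i j => ∫ x in (-1 : ℝ)..1, psiF ((j : ℕ) + 1) x * psiF ((i : ℕ) + 1) x

/-- The `(N−1)×(N−1)` stiffness matrix `S_{mn} = ∫ φ_n' φ_m'`. -/
noncomputable def stiffMatrix (N : ℕ) : Matrix (Fin (N - 1)) (Fin (N - 1)) ℝ :=
  Matrix.of fun i j =>
    ∫ x in (-1 : ℝ)..1, deriv (phiF ((j : ℕ) + 1)) x * deriv (phiF ((i : ℕ) + 1)) x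

open scoped Kronecker

/-- The symmetric block 2×2 matrix `[[A¹¹,A¹²],[A²¹,A²²]]` of the 3D interior-mode
discretization, built from Kronecker products of `M`, `T`, `I`, where `T` stands for
the stiffness matrix `S` (for `A`) or for `M⁻¹` (for `Ã`). -/
noncomputable def interiorBlock (N : ℕ) (κ : ℝ)
    (T : Matrix (Fin (N - 1)) (Fin (N - 1)) ℝ) :
    Matrix ((Fin (N - 1) × Fin (N - 1) × Fin (N - 1)) ⊕
        (Fin (N - 1) × Fin (N - 1) × Fin (N - 1)))
      ((Fin (N - 1) × Fin (N - 1) × Fin (N - 1)) ⊕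
        (Fin (N - 1) × Fin (N - 1) × Fin (N - 1))) ℝ :=
  let M := massMatrix N
  let I1 : Matrix (Fin (N - 1)) (Fin (N - 1)) ℝ := 1
  let A11 := T ⊗ₖ (M ⊗ₖ I1) + T ⊗ₖ (I1 ⊗ₖ M) + I1 ⊗ₖ (M ⊗ₖ T) + I1 ⊗ₖ (T ⊗ₖ M) +
    (2 : ℝ) • (I1 ⊗ₖ (I1 ⊗ₖ I1)) + κ • (I1 ⊗ₖ (I1 ⊗ₖ M) + I1 ⊗ₖ (M ⊗ₖ I1))
  let A22 := M ⊗ₖ (T ⊗ₖ I1) + T ⊗ₖ (I1 ⊗ₖ M) + M ⊗ₖ (I1 ⊗ₖ T) + I1 ⊗ₖ (T ⊗ₖ M) +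
    (2 : ℝ) • (I1 ⊗ₖ (I1 ⊗ₖ I1)) + κ • (I1 ⊗ₖ (I1 ⊗ₖ M) + M ⊗ₖ (I1 ⊗ₖ I1))
  let A12 := T ⊗ₖ (I1 ⊗ₖ M) + I1 ⊗ₖ (T ⊗ₖ M) + I1 ⊗ₖ (I1 ⊗ₖ I1) +
    κ • (I1 ⊗ₖ (I1 ⊗ₖ M))
  Matrix.fromBlocks A11 A12 A12 A22

/-!
Since `ψ_{m+1}' = φ_m` and `ψ_{m+1}` vanishes at `±1`, integration by parts turns the orthonormality
of the `φ_m` into biorthogonality in `L²(-1, 1)` of the families `ψ_{m+1}` and `-φ_m'`, whose Gram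
matrices are `M` and `S`. The functions `-φ_1', …, -φ_{N-1}'` span the polynomials of degree less
than `N - 1`. Each of the first `N - 3` functions `ψ_{m+1}` therefore expands in them, with
coefficients given by the corresponding column `M e` of `M`, and this says that `S M e = e`. So `S`
and `M⁻¹` agree on `N - 3` independent vectors, and `A` and `Ã` agree on the threefold tensor
products of these vectors in both components.
-/

lemma card_le_finrank_ker_of_mul_eq_zero {K m n r : Type*} [Field K] [Fintype n] [DecidableEq n]
    [Fintype r] [DecidableEq r] {A : Matrix m n K} {Q : Matrix n r K} {L : Matrix r n K}
    (hLQ : L * Q = 1) (hAQ : A * Q = 0) :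
    Fintype.card r ≤ Module.finrank K (LinearMap.ker (Matrix.toLin' A)) := by
  have hinj : Function.Injective (Matrix.toLin' Q) :=
    Function.LeftInverse.injective (g := Matrix.toLin' L) fun x => by
      rw [← Matrix.toLin'_mul_apply, hLQ, Matrix.toLin'_one, LinearMap.id_apply]
  have hle : LinearMap.range (Matrix.toLin' Q) ≤ LinearMap.ker (Matrix.toLin' A) := by
    rw [LinearMap.range_le_ker_iff, ← Matrix.toLin'_mul, hAQ, map_zero]
  calc Fintype.card r = Module.finrank K (LinearMap.range (Matrix.toLin' Q)) := by
        rw [LinearMap.finrank_range_of_inj hinj, Module.finrank_fintype_fun_eq_card]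
    _ ≤ _ := Submodule.finrank_mono hle

section InteriorBlock

variable {N : ℕ} {κ : ℝ} {r : Type*}
  {T T' : Matrix (Fin (N - 1)) (Fin (N - 1)) ℝ} {P : Matrix (Fin (N - 1)) r ℝ}

lemma interiorBlock_mul_eq_of_mul_eq (h : T * P = T' * P) :
    interiorBlock N κ T * Matrix.fromBlocks (P ⊗ₖ (P ⊗ₖ P)) 0 0 (P ⊗ₖ (P ⊗ₖ P)) =
      interiorBlock N κ T' * Matrix.fromBlocks (P ⊗ₖ (P ⊗ₖ P)) 0 0 (P ⊗ₖ (P ⊗ₖ P)) := by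
  classical
  simp only [interiorBlock, Matrix.fromBlocks_multiply, Matrix.mul_zero, add_zero, zero_add,
    Matrix.add_mul, Matrix.smul_mul, ← Matrix.mul_kronecker_mul, h]

lemma two_mul_card_pow_three_le_finrank_ker_interiorBlock_sub [Fintype r] [DecidableEq r]
    {L : Matrix r (Fin (N - 1)) ℝ} (hLP : L * P = 1) (h : T * P = T' * P) :
    2 * Fintype.card r ^ 3 ≤ Module.finrank ℝ
      (LinearMap.ker (Matrix.toLin' (interiorBlock N κ T - interiorBlock N κ T'))) := by
  have hL3 : (L ⊗ₖ (L ⊗ₖ L)) * (P ⊗ₖ (P ⊗ₖ P)) = 1 := by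
    simp only [← Matrix.mul_kronecker_mul, hLP, Matrix.one_kronecker_one]
  have hLQ : Matrix.fromBlocks (L ⊗ₖ (L ⊗ₖ L)) 0 0 (L ⊗ₖ (L ⊗ₖ L)) *
      Matrix.fromBlocks (P ⊗ₖ (P ⊗ₖ P)) 0 0 (P ⊗ₖ (P ⊗ₖ P)) = 1 := by
    simp only [Matrix.fromBlocks_multiply, hL3, Matrix.mul_zero, Matrix.zero_mul, add_zero,
      zero_add, Matrix.fromBlocks_one]
  calc 2 * Fintype.card r ^ 3 = Fintype.card ((r × r × r) ⊕ (r × r × r)) := by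
        simp only [Fintype.card_sum, Fintype.card_prod]; ring
    _ ≤ _ := card_le_finrank_ker_of_mul_eq_zero hLQ <| by
        rw [Matrix.sub_mul, interiorBlock_mul_eq_of_mul_eq h, sub_self]

end InteriorBlock

section Gram

variable {ι R V : Type*}

section Semiring

variable [CommSemiring R] [AddCommMonoid V] [Module R V]

lemma sum_apply_smul_eq_of_mem_span [Fintype ι] [DecidableEq ι] {f : ι → Module.Dual R V}
    {v : ι → V} (h : ∀ i j, f i (v j) = if i = j then 1 else 0) {p : V}
    (hp : p ∈ Submodule.span R (Set.range v)) : ∑ i, f i p • v i = p := by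
  obtain ⟨c, rfl⟩ := Submodule.mem_span_range_iff_exists_fun R |>.mp hp
  simp only [map_sum, map_smul, h, smul_eq_mul, mul_ite, mul_one, mul_zero, Finset.sum_ite_eq,
    Finset.mem_univ, if_true]

/-- The Gram matrix of a family of vectors with respect to a bilinear form; Mathlib's
`Matrix.gram` is tied to the inner product of an inner product space. -/
def formGram (B : LinearMap.BilinForm R V) (v : ι → V) : Matrix ι ι R :=
  Matrix.of fun i j => B (v i) (v j)

lemma formGram_mul_formGram_apply [Fintype ι] [DecidableEq ι] {B : LinearMap.BilinForm R V}
    (hB : B.IsSymm) {u v : ι → V} (huv : ∀ i j, B (u i) (v j) = if i = j then 1 else 0) {j : ι}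
    (hj : u j ∈ Submodule.span R (Set.range v)) (i : ι) :
    (formGram B v * formGram B u) i j = (1 : Matrix ι ι R) i j := by
  calc (formGram B v * formGram B u) i j = ∑ k, B (v i) (v k) * B (u k) (u j) := rfl
    _ = B (v i) (∑ k, B (u k) (u j) • v k) := by
        simp only [map_sum, map_smul, smul_eq_mul, mul_comm]
    _ = B (u j) (v i) := by
        rw [sum_apply_smul_eq_of_mem_span (f := fun k => B (u k)) huv hj, hB.eq]
    _ = (1 : Matrix ι ι R) i j := by simp only [huv, Matrix.one_apply, eq_comm]

end Semiring

lemma det_formGram_ne_zero [Fintype ι] [DecidableEq ι] [CommRing R] [IsDomain R] [AddCommGroup V]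
    [Module R V] {B : LinearMap.BilinForm R V} (hB : ∀ p, B p p = 0 → p = 0) {u : ι → V}
    (hu : LinearIndependent R u) :
    (formGram B u).det ≠ 0 := by
  intro hdet
  obtain ⟨c, hc, hMc⟩ := Matrix.exists_vecMul_eq_zero_iff.mpr hdet
  have horth (j : ι) : B (∑ i, c i • u i) (u j) = 0 := by
    simpa [Matrix.vecMul, dotProduct, formGram] using congrFun hMc j
  have hsum : ∑ i, c i • u i = 0 := hB _ <| by
    rw [map_sum]
    simp only [map_smul, horth, smul_zero, Finset.sum_const_zero]
  exact hc <| funext <| Fintype.linearIndependent_iff.mp hu c hsum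

end Gram

section PolynomialDegree

lemma natDegree_iterate_derivative_eq {R : Type*} [Semiring R] [IsAddTorsionFree R] (p : R[X])
    (k : ℕ) : (derivative^[k] p).natDegree = p.natDegree - k := by
  induction k with
  | zero => simp
  | succ k ih => rw [Function.iterate_succ_apply', natDegree_derivative, ih, Nat.sub_sub]

lemma mem_span_range_sequence_of_natDegree_lt {K : Type*} [Field K] (S : Polynomial.Sequence K)
    {n : ℕ} {p : K[X]} (hp : p.natDegree < n) :
    p ∈ Submodule.span K (Set.range fun k : Fin n => S k) := by
  have hrange : (Set.range fun k : Fin n => S k) = S '' Set.Iio n := by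
    rw [← Fin.range_val, ← Set.range_comp]
    rfl
  rw [hrange, S.span_degreeLT (by simp), mem_degreeLT]
  exact degree_le_natDegree.trans_lt (by exact_mod_cast hp)

end PolynomialDegree

section IntervalForm

/-- The bilinear form `(p, q) ↦ ∫ x in a..b, p x * q x` on real polynomials. -/
noncomputable def intervalForm (a b : ℝ) : LinearMap.BilinForm ℝ ℝ[X] :=
  (LinearMap.mul ℝ ℝ[X]).compr₂
    { toFun p := ∫ x in a..b, p.eval x
      map_add' p q := by
        simp only [eval_add]
        exact intervalIntegral.integral_add (p.continuous.intervalIntegrable _ _)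
          (q.continuous.intervalIntegrable _ _)
      map_smul' c p := by
        simp only [eval_smul, smul_eq_mul, intervalIntegral.integral_const_mul,
          RingHom.id_apply] }

variable {a b : ℝ}

lemma intervalForm_apply (p q : ℝ[X]) :
    intervalForm a b p q = ∫ x in a..b, p.eval x * q.eval x := by
  simp only [← eval_mul]
  rfl

lemma isSymm_intervalForm : (intervalForm a b).IsSymm :=
  ⟨fun p q => by simp only [intervalForm_apply, mul_comm]⟩

lemma intervalForm_derivative_add (p q : ℝ[X]) :
    intervalForm a b (derivative p) q + intervalForm a b p (derivative q) =
      (p * q).eval b - (p * q).eval a := by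
  calc intervalForm a b (derivative p) q + intervalForm a b p (derivative q)
      = intervalForm a b 1 (derivative (p * q)) := by
        simp only [derivative_mul, map_add]
        congr 1 <;> simp only [intervalForm_apply, eval_one, one_mul, eval_mul]
    _ = ∫ x in a..b, (derivative (p * q)).eval x := by
        simp only [intervalForm_apply, eval_one, one_mul]
    _ = (p * q).eval b - (p * q).eval a :=
        intervalIntegral.integral_eq_sub_of_hasDerivAt (fun x _ => (p * q).hasDerivAt x)
          ((derivative (p * q)).continuous.intervalIntegrable _ _)

lemma intervalForm_derivative_of_eval_eq_zero {p : ℝ[X]} (ha : p.eval a = 0) (hb : p.eval b = 0)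
    (q : ℝ[X]) : intervalForm a b (derivative p) q = -intervalForm a b p (derivative q) := by
  rw [eq_neg_iff_add_eq_zero, intervalForm_derivative_add, eval_mul, eval_mul, ha, hb]
  ring

lemma intervalForm_iterate_derivative {n : ℕ} {p : ℝ[X]}
    (ha : ∀ k < n, (derivative^[k] p).eval a = 0) (hb : ∀ k < n, (derivative^[k] p).eval b = 0)
    (q : ℝ[X]) :
    intervalForm a b (derivative^[n] p) q = (-1) ^ n * intervalForm a b p (derivative^[n] q) := by
  induction n generalizing q with
  | zero => simp
  | succ n ih =>
    rw [Function.iterate_succ_apply',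
      intervalForm_derivative_of_eval_eq_zero (ha n n.lt_succ_self) (hb n n.lt_succ_self),
      ih (fun k hk => ha k (hk.trans n.lt_succ_self)) (fun k hk => hb k (hk.trans n.lt_succ_self)),
      Function.iterate_succ_apply]
    ring

lemma eq_zero_of_intervalForm_self_eq_zero (hab : a < b) {p : ℝ[X]}
    (h : intervalForm a b p p = 0) : p = 0 := by
  by_contra hp
  obtain ⟨c, hc, hpc⟩ : ∃ c ∈ Set.Icc a b, p.eval c ≠ 0 := by
    by_contra! hroot
    exact hp <| eq_zero_of_infinite_isRoot p <| (Set.Icc_infinite hab).mono hroot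
  refine h.not_gt ?_
  rw [intervalForm_apply]
  exact intervalIntegral.integral_pos hab (p.continuous.mul p.continuous).continuousOn
    (fun x _ => mul_self_nonneg _) ⟨c, hc, mul_self_pos.mpr hpc⟩

end IntervalForm

section Legendre

/-- The normalized power `W_n = (X² - 1)ⁿ / (2ⁿ n!)`, whose `n`-th derivative is the Legendre
polynomial. The normalization is chosen so that `W_{n+1}' = X W_n`. -/
noncomputable def rodriguesPoly (n : ℕ) : ℝ[X] :=
  C ((1 : ℝ) / (2 ^ n * n.factorial)) * (X ^ 2 - 1) ^ n

lemma legendre_eq_iterate_derivative (n : ℕ) :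
    legendre n = derivative^[n] (rodriguesPoly n) := by
  rw [legendre, rodriguesPoly, iterate_derivative_C_mul]

lemma two_mul_mul_rodriguesCoeff_succ (n : ℕ) :
    2 * ((n : ℝ) + 1) * (1 / (2 ^ (n + 1) * (n + 1).factorial)) = 1 / (2 ^ n * n.factorial) := by
  rw [Nat.factorial_succ]
  push_cast
  field_simp
  ring

lemma two_mul_rodriguesPoly_succ (n : ℕ) :
    C (2 * ((n : ℝ) + 1)) * rodriguesPoly (n + 1) = (X ^ 2 - 1) * rodriguesPoly n := by
  rw [rodriguesPoly, rodriguesPoly, ← mul_assoc, ← C_mul, two_mul_mul_rodriguesCoeff_succ]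
  ring

lemma derivative_rodriguesPoly_succ (n : ℕ) :
    derivative (rodriguesPoly (n + 1)) = X * rodriguesPoly n := by
  have hpow : derivative ((X ^ 2 - 1 : ℝ[X]) ^ (n + 1)) =
      C (2 * ((n : ℝ) + 1)) * (X * (X ^ 2 - 1) ^ n) := by
    simp only [derivative_pow, derivative_sub, derivative_X, derivative_one, Nat.cast_add,
      Nat.cast_one, Nat.add_sub_cancel, map_add, map_mul, map_one, map_natCast, map_ofNat]
    ring
  rw [rodriguesPoly, rodriguesPoly, derivative_C_mul, hpow, ← mul_assoc, ← C_mul,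
    mul_comm _ (2 * _), two_mul_mul_rodriguesCoeff_succ]
  ring

lemma derivative_derivative_rodriguesPoly (n : ℕ) :
    derivative (derivative (rodriguesPoly (n + 2))) =
      (2 * (n : ℝ) + 3) • rodriguesPoly (n + 1) + rodriguesPoly n := by
  have h := two_mul_rodriguesPoly_succ n
  rw [derivative_rodriguesPoly_succ, derivative_mul, derivative_X, derivative_rodriguesPoly_succ,
    smul_eq_C_mul]
  simp only [map_add, map_mul, map_one, map_ofNat] at h ⊢
  linear_combination -h

lemma eval_iterate_derivative_rodriguesPoly {k n : ℕ} (hk : k < n) {x : ℝ} (hx : x ^ 2 = 1) :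
    (derivative^[k] (rodriguesPoly n)).eval x = 0 := by
  have hdvd : (X ^ 2 - 1 : ℝ[X]) ∣ derivative^[k] ((X ^ 2 - 1) ^ n) :=
    (dvd_pow_self _ (Nat.sub_ne_zero_of_lt hk)).trans (pow_sub_dvd_iterate_derivative_pow _ n k)
  obtain ⟨q, hq⟩ := hdvd
  rw [rodriguesPoly, iterate_derivative_C_mul, hq]
  simp [hx]

lemma legendre_add_two_sub (n : ℕ) :
    legendre (n + 2) - legendre n = (2 * (n : ℝ) + 3) • derivative^[n] (rodriguesPoly (n + 1)) := by
  simp only [legendre_eq_iterate_derivative, Function.iterate_add_apply derivative n 2,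
    Function.iterate_succ_apply, Function.iterate_zero_apply, derivative_derivative_rodriguesPoly,
    iterate_map_add, iterate_derivative_smul, add_sub_cancel_right]

lemma derivative_legendre_add_two_sub (n : ℕ) :
    derivative (legendre (n + 2) - legendre n) = (2 * (n : ℝ) + 3) • legendre (n + 1) := by
  rw [legendre_add_two_sub, derivative_smul, legendre_eq_iterate_derivative,
    Function.iterate_succ_apply']

lemma eval_legendre_add_two_sub (n : ℕ) {x : ℝ} (hx : x ^ 2 = 1) :
    (legendre (n + 2) - legendre n).eval x = 0 := by
  rw [legendre_add_two_sub, eval_smul, eval_iterate_derivative_rodriguesPoly n.lt_succ_self hx,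
    smul_zero]

lemma legendre_zero : legendre 0 = 1 := by
  simp [legendre]

lemma legendre_one : legendre 1 = X := by
  rw [legendre_eq_iterate_derivative, Function.iterate_one, derivative_rodriguesPoly_succ]
  simp [rodriguesPoly]

lemma eval_legendre_of_sq_eq_one (n : ℕ) {x : ℝ} (hx : x ^ 2 = 1) :
    (legendre n).eval x = x ^ n := by
  induction n using Nat.twoStepInduction with
  | zero => simp [legendre_zero]
  | one => simp [legendre_one]
  | more n ih _ =>
    have h := eval_legendre_add_two_sub n hx
    rw [eval_sub, sub_eq_zero] at h
    rw [h, ih, pow_add, hx, mul_one]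

lemma natDegree_legendre (n : ℕ) : (legendre n).natDegree = n := by
  have hquad : (X ^ 2 - 1 : ℝ[X]).natDegree = 2 := by
    simpa using natDegree_X_pow_sub_C (R := ℝ) (n := 2) (r := 1)
  rw [legendre, natDegree_C_mul (by positivity), natDegree_iterate_derivative_eq, natDegree_pow,
    hquad]
  omega

local notation "⟪" p "," q "⟫" => intervalForm (-1) 1 p q

lemma intervalForm_legendre_of_natDegree_lt {n : ℕ} {q : ℝ[X]} (hq : q.natDegree < n) :
    ⟪legendre n, q⟫ = 0 := by
  rw [legendre_eq_iterate_derivative, intervalForm_iterate_derivative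
    (fun k hk => eval_iterate_derivative_rodriguesPoly hk (by norm_num))
    (fun k hk => eval_iterate_derivative_rodriguesPoly hk (by norm_num)),
    iterate_derivative_eq_zero hq, map_zero, mul_zero]

lemma intervalForm_legendre_of_ne {m n : ℕ} (h : m ≠ n) : ⟪legendre m, legendre n⟫ = 0 := by
  wlog hlt : n < m generalizing m n
  · rw [isSymm_intervalForm.eq]
    exact this h.symm (by omega)
  · exact intervalForm_legendre_of_natDegree_lt (by rwa [natDegree_legendre])

lemma intervalForm_legendre_derivative_legendre_succ (n : ℕ) :
    ⟪legendre n, derivative (legendre (n + 1))⟫ = 2 := by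
  have hparts := intervalForm_derivative_add (a := -1) (b := 1) (legendre n) (legendre (n + 1))
  have horth : ⟪derivative (legendre n), legendre (n + 1)⟫ = 0 := by
    rw [isSymm_intervalForm.eq]
    refine intervalForm_legendre_of_natDegree_lt ?_
    rw [natDegree_derivative, natDegree_legendre]
    omega
  have hsq : (-1 : ℝ) ^ n * (-1) ^ n = 1 := by rw [← mul_pow]; norm_num
  rw [horth, zero_add, eval_mul, eval_mul] at hparts
  rw [hparts]
  simp only [eval_legendre_of_sq_eq_one _ (one_pow 2), eval_legendre_of_sq_eq_one _ neg_one_sq]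
  rw [one_pow, one_pow, pow_succ, ← mul_assoc, hsq]
  norm_num

lemma intervalForm_legendre_self (n : ℕ) : ⟪legendre n, legendre n⟫ = 2 / (2 * (n : ℝ) + 1) := by
  rcases n with _ | n
  · norm_num [legendre_zero, intervalForm_apply]
  have hrec : (2 * (n : ℝ) + 3) * ⟪legendre (n + 1), legendre (n + 1)⟫ = 2 := by
    calc (2 * (n : ℝ) + 3) * ⟪legendre (n + 1), legendre (n + 1)⟫
        = ⟪derivative (legendre (n + 2) - legendre n), legendre (n + 1)⟫ := by
          rw [derivative_legendre_add_two_sub, map_smul, LinearMap.smul_apply, smul_eq_mul]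
      _ = -⟪legendre (n + 2) - legendre n, derivative (legendre (n + 1))⟫ :=
          intervalForm_derivative_of_eval_eq_zero (eval_legendre_add_two_sub n (by norm_num))
            (eval_legendre_add_two_sub n (by norm_num)) _
      _ = 2 := by
          rw [map_sub, LinearMap.sub_apply, intervalForm_legendre_of_natDegree_lt,
            intervalForm_legendre_derivative_legendre_succ]
          · ring
          · rw [natDegree_derivative, natDegree_legendre]
            omega
  rw [eq_div_iff (by positivity), mul_comm]
  convert hrec using 2
  push_cast
  ring

/-- The polynomial underlying `φ_{k+1}`, so that `phiPoly k` goes with the row index `k` of the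
stiffness matrix. -/
noncomputable def phiPoly (k : ℕ) : ℝ[X] :=
  √((2 * (k : ℝ) + 3) / 2) • legendre (k + 1)

/-- The polynomial underlying `psiF (k + 1)`, which is `ψ_{k+2}` in the paper's numbering, so that
`psiPoly k` goes with the row index `k` of the mass matrix. -/
noncomputable def psiPoly (k : ℕ) : ℝ[X] :=
  (√(2 * (2 * (k : ℝ) + 3)))⁻¹ • (legendre (k + 2) - legendre k)

lemma phiF_succ (k : ℕ) : phiF (k + 1) = fun x => (phiPoly k).eval x := by
  have hk : 2 * ((k + 1 : ℕ) : ℝ) + 1 = 2 * k + 3 := by push_cast; ring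
  funext x
  rw [phiF, phiPoly, hk, eval_smul, smul_eq_mul]

lemma psiF_succ (k : ℕ) (x : ℝ) : psiF (k + 1) x = (psiPoly k).eval x := by
  have hk : 2 * ((k + 1 : ℕ) : ℝ) + 1 = 2 * k + 3 := by push_cast; ring
  rw [psiF, psiPoly, hk, eval_smul, smul_eq_mul, eval_sub, Nat.add_sub_cancel]

lemma derivative_psiPoly (k : ℕ) : derivative (psiPoly k) = phiPoly k := by
  have hpos : 0 < 2 * (k : ℝ) + 3 := by positivity
  have hcoeff : (√(2 * (2 * (k : ℝ) + 3)))⁻¹ * (2 * (k : ℝ) + 3) = √((2 * (k : ℝ) + 3) / 2) := by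
    rw [Real.sqrt_div hpos.le, Real.sqrt_mul zero_le_two]
    field_simp
    exact (Real.sq_sqrt hpos.le).symm
  rw [psiPoly, phiPoly, derivative_smul, derivative_legendre_add_two_sub, smul_smul, hcoeff]

lemma eval_psiPoly_of_sq_eq_one (k : ℕ) {x : ℝ} (hx : x ^ 2 = 1) : (psiPoly k).eval x = 0 := by
  rw [psiPoly, eval_smul, eval_legendre_add_two_sub k hx, smul_zero]

lemma natDegree_phiPoly (k : ℕ) : (phiPoly k).natDegree = k + 1 := by
  rw [phiPoly, natDegree_smul _ (by positivity), natDegree_legendre]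

lemma natDegree_psiPoly (k : ℕ) : (psiPoly k).natDegree = k + 2 := by
  have h := natDegree_derivative (psiPoly k)
  rw [derivative_psiPoly, natDegree_phiPoly] at h
  omega

lemma intervalForm_phiPoly (i j : ℕ) : ⟪phiPoly i, phiPoly j⟫ = if i = j then 1 else 0 := by
  rw [phiPoly, phiPoly, map_smul, map_smul, LinearMap.smul_apply]
  split_ifs with h
  · subst h
    rw [smul_smul, Real.mul_self_sqrt (by positivity), intervalForm_legendre_self, smul_eq_mul]
    push_cast
    field_simp
    ring
  · rw [intervalForm_legendre_of_ne (by simpa using h), smul_zero, smul_zero]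

/-- The family `k ↦ -φ_{k+1}'`, which is dual to `psiPoly` with respect to the `L²(-1, 1)` inner
product and whose Gram matrix is the stiffness matrix. The sign makes the pairing `δ` rather than
`-δ`. -/
noncomputable def negDerivPhiSeq : Polynomial.Sequence ℝ where
  elems' k := -derivative (phiPoly k)
  degree_eq' k := by
    rw [degree_neg, degree_derivative (by simp [natDegree_phiPoly]), natDegree_phiPoly,
      Nat.add_sub_cancel]

lemma intervalForm_psiPoly_negDerivPhiSeq (i j : ℕ) :
    ⟪psiPoly i, negDerivPhiSeq j⟫ = if i = j then 1 else 0 := by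
  calc ⟪psiPoly i, -derivative (phiPoly j)⟫ = ⟪derivative (psiPoly i), phiPoly j⟫ := by
        rw [map_neg, intervalForm_derivative_of_eval_eq_zero
          (eval_psiPoly_of_sq_eq_one i (by norm_num)) (eval_psiPoly_of_sq_eq_one i (by norm_num))]
    _ = if i = j then 1 else 0 := by rw [derivative_psiPoly, intervalForm_phiPoly]

lemma linearIndependent_psiPoly : LinearIndependent ℝ psiPoly :=
  .of_pairwise_dual_eq_zero_one _ (fun i => (intervalForm (-1) 1).flip (negDerivPhiSeq i))
    (fun i j hij => by simp [intervalForm_psiPoly_negDerivPhiSeq, hij.symm])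
    (fun i => by simp [intervalForm_psiPoly_negDerivPhiSeq])

end Legendre

section MassStiffness

variable {N : ℕ}

lemma massMatrix_eq_formGram :
    massMatrix N = formGram (intervalForm (-1) 1) fun k : Fin (N - 1) => psiPoly k := by
  ext i j
  simp [massMatrix, formGram, psiF_succ, intervalForm_apply, mul_comm]

lemma stiffMatrix_eq_formGram :
    stiffMatrix N = formGram (intervalForm (-1) 1) fun k : Fin (N - 1) => negDerivPhiSeq k := by
  ext i j
  simp [stiffMatrix, formGram, phiF_succ, intervalForm_apply, negDerivPhiSeq, mul_comm]

lemma isUnit_det_massMatrix : IsUnit (massMatrix N).det := by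
  rw [isUnit_iff_ne_zero, massMatrix_eq_formGram]
  exact det_formGram_ne_zero (fun _ => eq_zero_of_intervalForm_self_eq_zero (by norm_num))
    (linearIndependent_psiPoly.comp _ Fin.val_injective)

lemma stiffMatrix_mul_massMatrix_apply (i j : Fin (N - 1)) (hj : (j : ℕ) < N - 3) :
    (stiffMatrix N * massMatrix N) i j = (1 : Matrix (Fin (N - 1)) (Fin (N - 1)) ℝ) i j := by
  rw [massMatrix_eq_formGram, stiffMatrix_eq_formGram]
  refine formGram_mul_formGram_apply isSymm_intervalForm (fun k l => ?_) ?_ i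
  · simp only [intervalForm_psiPoly_negDerivPhiSeq, Fin.ext_iff]
  · exact mem_span_range_sequence_of_natDegree_lt _ (by rw [natDegree_psiPoly]; omega)

end MassStiffness

/-- With `A = interiorBlock N κ S` and `Ã = interiorBlock N κ M⁻¹` (obtained from `A`
by replacing every occurrence of `S` with `M⁻¹`), the solution space of `A x = Ã x` in
`ℝ^{2(N−1)³}` has dimension at least `2(N−3)³`. -/
theorem eigenspace_one_dim_ge_3d (N : ℕ) (hN : 4 ≤ N) (κ : ℝ) :
    2 * (N - 3) ^ 3 ≤
      Module.finrank ℝ ↥(LinearMap.ker (Matrix.toLin'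
        (interiorBlock N κ (stiffMatrix N) - interiorBlock N κ (massMatrix N)⁻¹))) := by
  let low : Fin (N - 3) → Fin (N - 1) := Fin.castLE (by omega)
  have hinv : (massMatrix N)⁻¹ * massMatrix N = 1 := Matrix.nonsing_inv_mul _ isUnit_det_massMatrix
  have hleft : (massMatrix N)⁻¹.submatrix low id * (massMatrix N).submatrix id low = 1 := by
    rw [← Matrix.submatrix_mul _ _ _ _ _ Function.bijective_id, hinv]
    exact Matrix.submatrix_one low (Fin.castLE_injective _)
  have hagree : stiffMatrix N * (massMatrix N).submatrix id low =
      (massMatrix N)⁻¹ * (massMatrix N).submatrix id low := by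
    calc stiffMatrix N * (massMatrix N).submatrix id low
        = (stiffMatrix N * massMatrix N).submatrix id low := rfl
      _ = (1 : Matrix _ _ ℝ).submatrix id low := by
          ext i j
          exact stiffMatrix_mul_massMatrix_apply i (low j) j.isLt
      _ = (massMatrix N)⁻¹ * (massMatrix N).submatrix id low := by rw [← hinv]; rfl
  simpa only [Fintype.card_fin] using
    two_mul_card_pow_three_le_finrank_ker_interiorBlock_sub hleft hagree
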